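/- arXiv:1509.06898 — 3 statements merged into one kernel-verified Lean document; each statement's English description precedes it below -/
import Mathlib

section
/- Let T be a finite tile set over a glue alphabet in which every glue has strength at most g, let c ≥ 1 be an integer, and let τ₁, τ₂, … be a sequence of nondecreasing temperature functions and k₁, k₂, … a sequence of pairwise distinct positive integers such that for each i the size-dependent system (T, τᵢ) has at least one terminal supertile and self-assembles a kᵢ × hᵢ rectangle for some integer hᵢ with 1 ≤ hᵢ ≤ c. Define f(n) = infᵢ τᵢ(n). Then f(n) ≤ (c + 1)·g for every n ≥ 1; in particular f(n) = O(1). -/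
/-!
Infinitely many widths leave none of them as a bound, so for given `n` some system has a terminal
rectangle with at least `2 * n` columns. The vertical line after its column `n` splits it into two
connected parts of at least `n` tiles each and crosses one edge per row, at most `c` edges in all,
so the cut has strength at most `c * g`. A terminal supertile does not break, so the temperature
at `n` is at most `c * g`.
-/

/-- A tile type over glue alphabet `G`: four glues on the north, east, south,
and west edges. -/
structure Tile (G : Type) where
  north : G
  east : G
  south : G
  west : G

/-- Grid adjacency: two points of `ℤ²` at Euclidean distance 1. -/
def Adj (p q : ℤ × ℤ) : Prop :=
  (p.1 - q.1).natAbs + (p.2 - q.2).natAbs = 1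

/-- A set of grid points is connected under grid adjacency. -/
def ConnectedIn (S : Set (ℤ × ℤ)) : Prop :=
  ∀ p ∈ S, ∀ q ∈ S,
    Relation.ReflTransGen (fun a b => Adj a b ∧ a ∈ S ∧ b ∈ S) p q

/-- An assembly over the tile set `T`: a finite partial function from `ℤ²` to
tiles of `T` whose domain is connected under grid adjacency. -/
structure Assembly (G : Type) (T : Set (Tile G)) where
  tiles : ℤ × ℤ → Option (Tile G)
  dom : Finset (ℤ × ℤ)
  mem_dom : ∀ p, p ∈ dom ↔ (tiles p).isSome
  connected : ConnectedIn (↑dom : Set (ℤ × ℤ))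
  tiles_mem : ∀ p t, tiles p = some t → t ∈ T

/-- Strength of the bond between two abutting glues: the glues bond iff they
are equal, in which case the bond strength is the glue strength. -/
noncomputable def glueBond {G : Type} (str : G → ℕ) (a b : G) : ℕ := by
  classical
  exact if a = b then str a else 0

/-- The strength of the bond between a tile `t` at position `p` and a tile `u`
at position `q` (0 unless `p` and `q` are adjacent and the abutting glues
match). -/
noncomputable def tileBond {G : Type} (str : G → ℕ) (t u : Tile G) (p q : ℤ × ℤ) : ℕ :=
  if q = (p.1 + 1, p.2) then glueBond str t.east u.west
  else if q = (p.1 - 1, p.2) then glueBond str t.west u.east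
  else if q = (p.1, p.2 + 1) then glueBond str t.north u.south
  else if q = (p.1, p.2 - 1) then glueBond str t.south u.north
  else 0

/-- The strength of the bond between the tiles of `α` at positions `p`, `q`. -/
noncomputable def posBond {G : Type} {T : Set (Tile G)} (str : G → ℕ)
    (α : Assembly G T) (p q : ℤ × ℤ) : ℕ :=
  match α.tiles p, α.tiles q with
  | some t, some u => tileBond str t u p q
  | _, _ => 0

/-- The strength of the cut of `α` into the parts `A` and `B`: the total
strength of bonds between tiles in opposite parts. -/
noncomputable def cutStrength {G : Type} {T : Set (Tile G)} (str : G → ℕ)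
    (α : Assembly G T) (A B : Finset (ℤ × ℤ)) : ℕ :=
  ∑ p ∈ A, ∑ q ∈ B, posBond str α p q

/-- An assembly is `τ`-stable if every cut of it into two nonempty parts of
sizes `a` and `b` has strength at least `τ (min a b)`. -/
def IsStable {G : Type} {T : Set (Tile G)} (str : G → ℕ) (τ : ℕ → ℕ)
    (α : Assembly G T) : Prop :=
  ∀ A B : Finset (ℤ × ℤ), Disjoint A B → A ∪ B = α.dom →
    A.Nonempty → B.Nonempty →
    τ (min A.card B.card) ≤ cutStrength str α A B

/-- Two assemblies represent the same supertile iff one is a translate of the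
other. -/
def SameSupertile {G : Type} {T : Set (Tile G)} (α β : Assembly G T) : Prop :=
  ∃ v : ℤ × ℤ, ∀ p : ℤ × ℤ, β.tiles (p + v) = α.tiles p

/-- `γ` is the union of the disjoint assemblies `α` and `β`. -/
def IsUnionOf {G : Type} {T : Set (Tile G)} (γ α β : Assembly G T) : Prop :=
  Disjoint α.dom β.dom ∧ γ.dom = α.dom ∪ β.dom ∧
    (∀ p ∈ α.dom, γ.tiles p = α.tiles p) ∧
    (∀ p ∈ β.dom, γ.tiles p = β.tiles p)

/-- The supertiles of `α` and `β` combine into the supertile of `γ`: there are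
disjoint representatives whose union is a representative of `γ` such that the
cut between them has strength at least `τ` of the size of the smaller part. -/
def CombinesTo {G : Type} {T : Set (Tile G)} (str : G → ℕ) (τ : ℕ → ℕ)
    (α β γ : Assembly G T) : Prop :=
  ∃ α' β' γ' : Assembly G T, SameSupertile α α' ∧ SameSupertile β β' ∧
    SameSupertile γ γ' ∧ IsUnionOf γ' α' β' ∧
    τ (min α'.dom.card β'.dom.card) ≤ cutStrength str γ' α'.dom β'.dom

/-- The supertile of `γ` breaks into the supertiles of `α` and `β`: there are
disjoint representatives (each with connected domain, as all assemblies have)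
whose union is a representative of `γ` such that the cut between them has
strength strictly less than `τ` of the size of the smaller part. -/
def BreaksTo {G : Type} {T : Set (Tile G)} (str : G → ℕ) (τ : ℕ → ℕ)
    (γ α β : Assembly G T) : Prop :=
  ∃ α' β' γ' : Assembly G T, SameSupertile α α' ∧ SameSupertile β β' ∧
    SameSupertile γ γ' ∧ IsUnionOf γ' α' β' ∧
    cutStrength str γ' α'.dom β'.dom < τ (min α'.dom.card β'.dom.card)

/-- The producible supertiles of the size-dependent system `(T, τ)`:
supertiles of size 1, combinations of two producible supertiles, and
supertiles resulting from a break of a producible supertile. -/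
inductive Producible {G : Type} (str : G → ℕ) (T : Set (Tile G)) (τ : ℕ → ℕ) :
    Assembly G T → Prop
  | single (α : Assembly G T) : α.dom.card = 1 → Producible str T τ α
  | combine (α β γ : Assembly G T) : Producible str T τ α →
      Producible str T τ β → CombinesTo str τ α β γ → Producible str T τ γ
  | breakLeft (γ α β : Assembly G T) : Producible str T τ γ →
      BreaksTo str τ γ α β → Producible str T τ α
  | breakRight (γ α β : Assembly G T) : Producible str T τ γ →
      BreaksTo str τ γ α β → Producible str T τ β

/-- A producible supertile is terminal if it admits no combination with any
producible supertile and no break. -/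
def Terminal {G : Type} (str : G → ℕ) (T : Set (Tile G)) (τ : ℕ → ℕ)
    (α : Assembly G T) : Prop :=
  Producible str T τ α ∧
    (∀ β γ : Assembly G T, Producible str T τ β →
      ¬ CombinesTo str τ α β γ ∧ ¬ CombinesTo str τ β α γ) ∧
    (∀ β γ : Assembly G T, ¬ BreaksTo str τ α β γ)

/-- The system `(T, τ)` self-assembles the shape `P` if every terminal
supertile consists of assemblies whose domain is a translate of `P`. -/
def SelfAssembles {G : Type} (str : G → ℕ) (T : Set (Tile G)) (τ : ℕ → ℕ)
    (P : Set (ℤ × ℤ)) : Prop :=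
  ∀ α : Assembly G T, Terminal str T τ α →
    ∃ v : ℤ × ℤ, (↑α.dom : Set (ℤ × ℤ)) = (· + v) '' P

/-- The `w × h` rectangle `{1,…,w} × {1,…,h}`. -/
def rect (w h : ℕ) : Set (ℤ × ℤ) :=
  {p | 1 ≤ p.1 ∧ p.1 ≤ (w : ℤ) ∧ 1 ≤ p.2 ∧ p.2 ≤ (h : ℤ)}

lemma reflTransGen_of_ordConnected {s : Set ℤ} (hs : s.OrdConnected) {x y : ℤ} (hx : x ∈ s)
    (hy : y ∈ s) :
    Relation.ReflTransGen (fun i j => (i - j).natAbs = 1 ∧ i ∈ s ∧ j ∈ s) x y := by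
  refine reflTransGen_of_succ _ (fun i hi => ?_) (fun i hi => ?_)
  all_goals
    rw [Set.mem_Ico] at hi
    rw [Order.succ_eq_add_one]
  · exact ⟨by omega, hs.out hx hy ⟨hi.1, by omega⟩, hs.out hx hy ⟨by omega, hi.2⟩⟩
  · exact ⟨by omega, hs.out hy hx ⟨by omega, hi.2⟩, hs.out hy hx ⟨hi.1, by omega⟩⟩

lemma connectedIn_prod {s t : Set ℤ} (hs : s.OrdConnected) (ht : t.OrdConnected) :
    ConnectedIn (s ×ˢ t) := by
  rintro ⟨x, y⟩ ⟨hx, hy⟩ ⟨x', y'⟩ ⟨hx', hy'⟩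
  have horizontal := (reflTransGen_of_ordConnected hs hx hx').lift
    (p := fun p q => Adj p q ∧ p ∈ s ×ˢ t ∧ q ∈ s ×ˢ t) (fun i => (i, y))
    fun i j ⟨hij, hi, hj⟩ => ⟨by simpa [Adj] using hij, ⟨hi, hy⟩, ⟨hj, hy⟩⟩
  have vertical := (reflTransGen_of_ordConnected ht hy hy').lift
    (p := fun p q => Adj p q ∧ p ∈ s ×ˢ t ∧ q ∈ s ×ˢ t) (fun j => (x', j))
    fun i j ⟨hij, hi, hj⟩ => ⟨by simpa [Adj] using hij, ⟨hx', hi⟩, ⟨hx', hj⟩⟩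
  exact horizontal.trans vertical

lemma image_add_rect (w h : ℕ) (v : ℤ × ℤ) :
    (· + v) '' rect w h =
      ↑(Finset.Ico (v.1 + 1) (v.1 + 1 + w) ×ˢ Finset.Ico (v.2 + 1) (v.2 + 1 + h)) := by
  ext p
  simp only [Set.image_add_right, rect, Set.mem_preimage, Set.mem_ofPred_eq, Prod.fst_add,
    Prod.snd_add, Prod.fst_neg, Prod.snd_neg, Finset.coe_product, Finset.coe_Ico, Set.mem_prod,
    Set.mem_Ico]
  omega

section Cut

variable {G : Type} {T : Set (Tile G)} {str : G → ℕ} {g : ℕ}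

lemma glueBond_le (hg : ∀ a, str a ≤ g) (a b : G) : glueBond str a b ≤ g := by
  unfold glueBond
  split_ifs
  · exact hg a
  · exact Nat.zero_le g

lemma tileBond_le (hg : ∀ a, str a ≤ g) (t u : Tile G) (p q : ℤ × ℤ) :
    tileBond str t u p q ≤ g := by
  unfold tileBond
  split_ifs <;> first | exact glueBond_le hg _ _ | exact Nat.zero_le g

lemma tileBond_eq_zero_of_not_adj (t u : Tile G) {p q : ℤ × ℤ} (hpq : ¬ Adj p q) :
    tileBond str t u p q = 0 := by
  unfold tileBond
  split_ifs with hE hW hN hS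
  all_goals first | rfl | exact absurd (by subst q; simp [Adj]) hpq

lemma posBond_le (hg : ∀ a, str a ≤ g) (α : Assembly G T) (p q : ℤ × ℤ) :
    posBond str α p q ≤ g := by
  unfold posBond
  split
  · exact tileBond_le hg _ _ p q
  · exact Nat.zero_le g

lemma posBond_eq_zero_of_not_adj (α : Assembly G T) {p q : ℤ × ℤ} (hpq : ¬ Adj p q) :
    posBond str α p q = 0 := by
  unfold posBond
  split
  · exact tileBond_eq_zero_of_not_adj _ _ hpq
  · rfl

open scoped Classical in
lemma cutStrength_le_card_adj_mul (hg : ∀ a, str a ≤ g) (α : Assembly G T)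
    (A B : Finset (ℤ × ℤ)) :
    cutStrength str α A B ≤ {e ∈ A ×ˢ B | Adj e.1 e.2}.card * g :=
  calc cutStrength str α A B
      = ∑ e ∈ A ×ˢ B, posBond str α e.1 e.2 := (Finset.sum_product' A B _).symm
    _ = ∑ e ∈ A ×ˢ B with Adj e.1 e.2, posBond str α e.1 e.2 :=
        (Finset.sum_filter_of_ne fun _ _ he =>
          not_not.1 (mt (posBond_eq_zero_of_not_adj α) he)).symm
    _ ≤ {e ∈ A ×ˢ B | Adj e.1 e.2}.card * g :=
        Finset.sum_le_card_nsmul _ _ _ fun _ _ => posBond_le hg α _ _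

open scoped Classical in
lemma card_adj_across_vertical_line_le {X X' : Finset ℤ} {m : ℤ} (hX : ∀ x ∈ X, x < m)
    (hX' : ∀ x ∈ X', m ≤ x) (Y Y' : Finset ℤ) :
    {e ∈ (X ×ˢ Y) ×ˢ (X' ×ˢ Y') | Adj e.1 e.2}.card ≤ Y.card := by
  refine Finset.card_le_card_of_injOn (fun e => e.1.2) (fun e he => ?_) ?_
  · simp only [Finset.mem_coe, Finset.mem_filter, Finset.mem_product] at he
    exact he.1.1.2
  · rintro ⟨⟨x₁, y₁⟩, ⟨x₁', y₁'⟩⟩ h₁ ⟨⟨x₂, y₂⟩, ⟨x₂', y₂'⟩⟩ h₂ hy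
    simp only [Finset.mem_coe, Finset.mem_filter, Finset.mem_product] at h₁ h₂ hy
    unfold Adj at h₁ h₂
    have := hX _ h₁.1.1.1
    have := hX' _ h₁.1.2.1
    have := hX _ h₂.1.1.1
    have := hX' _ h₂.1.2.1
    simp only [Prod.mk.injEq]
    omega

lemma cutStrength_across_vertical_line_le (hg : ∀ a, str a ≤ g) (α : Assembly G T)
    {X X' : Finset ℤ} {m : ℤ} (hX : ∀ x ∈ X, x < m) (hX' : ∀ x ∈ X', m ≤ x) (Y Y' : Finset ℤ) :
    cutStrength str α (X ×ˢ Y) (X' ×ˢ Y') ≤ Y.card * g :=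
  (cutStrength_le_card_adj_mul hg α _ _).trans
    (Nat.mul_le_mul_right g (card_adj_across_vertical_line_le hX hX' Y Y'))

end Cut

section Unbreakable

variable {G : Type} {T : Set (Tile G)} {str : G → ℕ} {τ : ℕ → ℕ} {α : Assembly G T}

/-- The restriction of an assembly to a connected part of its domain, which serves as one of the
two pieces of a break. -/
def Assembly.restrict (α : Assembly G T) (S : Finset (ℤ × ℤ)) (hS : S ⊆ α.dom)
    (hconn : ConnectedIn (S : Set (ℤ × ℤ))) : Assembly G T where
  tiles p := if p ∈ S then α.tiles p else none
  dom := S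
  mem_dom p := by
    by_cases hp : p ∈ S
    · simpa [hp] using (α.mem_dom p).1 (hS hp)
    · simp [hp]
  connected := hconn
  tiles_mem p t ht := α.tiles_mem p t (Option.ite_none_right_eq_some.1 ht).2

lemma SameSupertile.refl (α : Assembly G T) : SameSupertile α α :=
  ⟨0, fun p => by rw [add_zero]⟩

/-- The supertile of `α` admits no break at temperature function `τ`: the part of terminality that
bounds the temperature by the strengths of cuts. -/
def Unbreakable (str : G → ℕ) (τ : ℕ → ℕ) (α : Assembly G T) : Prop :=
  ∀ β γ : Assembly G T, ¬ BreaksTo str τ α β γ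

lemma Terminal.unbreakable (hα : Terminal str T τ α) : Unbreakable str τ α :=
  hα.2.2

lemma Unbreakable.le_cutStrength (hα : Unbreakable str τ α) {A B : Finset (ℤ × ℤ)}
    (hAB : Disjoint A B) (hdom : α.dom = A ∪ B) (hA : ConnectedIn (A : Set (ℤ × ℤ)))
    (hB : ConnectedIn (B : Set (ℤ × ℤ))) :
    τ (min A.card B.card) ≤ cutStrength str α A B := by
  by_contra! hlt
  exact hα (α.restrict A (hdom ▸ Finset.subset_union_left) hA)
    (α.restrict B (hdom ▸ Finset.subset_union_right) hB)
    ⟨_, _, α, .refl _, .refl _, .refl _,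
      ⟨hAB, hdom, fun _ hp => (if_pos hp).symm, fun _ hp => (if_pos hp).symm⟩, hlt⟩

variable {g : ℕ}

lemma Unbreakable.le_of_dom_eq_Ico_product (hα : Unbreakable str τ α) (hg : ∀ a, str a ≤ g)
    {a m b : ℤ} (ham : a ≤ m) (hmb : m ≤ b) {Y : Finset ℤ} (hY : (Y : Set ℤ).OrdConnected)
    (hdom : α.dom = Finset.Ico a b ×ˢ Y) :
    τ (min ((Finset.Ico a m).card * Y.card) ((Finset.Ico m b).card * Y.card)) ≤ Y.card * g := by
  have hconn (x y : ℤ) : ConnectedIn (↑(Finset.Ico x y ×ˢ Y) : Set (ℤ × ℤ)) := by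
    rw [Finset.coe_product, Finset.coe_Ico]
    exact connectedIn_prod Set.ordConnected_Ico hY
  have hdisj : Disjoint (Finset.Ico a m ×ˢ Y) (Finset.Ico m b ×ˢ Y) :=
    Finset.disjoint_product.2 (.inl (Finset.Ico_disjoint_Ico_consecutive a m b))
  have hunion : α.dom = Finset.Ico a m ×ˢ Y ∪ Finset.Ico m b ×ˢ Y := by
    rw [hdom, ← Finset.union_product, Finset.Ico_union_Ico_eq_Ico ham hmb]
  have hcut := hα.le_cutStrength hdisj hunion (hconn a m) (hconn m b)
  rw [Finset.card_product, Finset.card_product] at hcut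
  exact hcut.trans (cutStrength_across_vertical_line_le hg α
    (fun _ hx => (Finset.mem_Ico.1 hx).2) (fun _ hx => (Finset.mem_Ico.1 hx).1) Y Y)

lemma Unbreakable.le_of_dom_eq_image_rect (hα : Unbreakable str τ α) (hg : ∀ a, str a ≤ g)
    (hτ : Monotone τ) {w h n : ℕ} {v : ℤ × ℤ} (hdom : (α.dom : Set (ℤ × ℤ)) = (· + v) '' rect w h)
    (hnw : 2 * n ≤ w) :
    τ (n * h) ≤ h * g := by
  rw [image_add_rect, Finset.coe_inj] at hdom
  have hY : (↑(Finset.Ico (v.2 + 1) (v.2 + 1 + h)) : Set ℤ).OrdConnected := by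
    rw [Finset.coe_Ico]
    exact Set.ordConnected_Ico
  have hcut := hα.le_of_dom_eq_Ico_product hg (m := v.1 + 1 + n) (by omega) (by omega) hY hdom
  simp only [Int.card_Ico, add_sub_cancel_left, Int.toNat_natCast] at hcut
  exact (hτ (le_min le_rfl (Nat.mul_le_mul_right h (by omega)))).trans hcut

end Unbreakable

theorem rectangle_temperature_bound_general {G : Type} {ι : Type*} (str : G → ℕ) (g : ℕ)
    (hg : ∀ a : G, str a ≤ g) (T : Set (Tile G)) (c : ℕ)
    (τ : ι → ℕ → ℕ) (hτ : ∀ i, Monotone (τ i))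
    (k : ι → ℕ) (hk : (Set.range k).Infinite) (h : ι → ℕ)
    (hsys : ∀ i, 1 ≤ h i ∧ h i ≤ c ∧ ∃ α : Assembly G T, Unbreakable str (τ i) α ∧
      ∃ v : ℤ × ℤ, (α.dom : Set (ℤ × ℤ)) = (· + v) '' rect (k i) (h i))
    (n : ℕ) :
    (⨅ i, τ i n) ≤ c * g := by
  obtain ⟨_, ⟨i, rfl⟩, hi⟩ := hk.exists_gt (2 * n)
  obtain ⟨hpos, hle, α, hα, v, hdom⟩ := hsys i
  calc (⨅ i, τ i n) ≤ τ i n := ciInf_le (OrderBot.bddBelow _) i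
    _ ≤ τ i (n * h i) := hτ i (Nat.le_mul_of_pos_right n hpos)
    _ ≤ h i * g := hα.le_of_dom_eq_image_rect hg (hτ i) hdom hi.le
    _ ≤ c * g := Nat.mul_le_mul_right g hle

/-- If `T` is a finite tile set over a glue alphabet in which
every glue has strength at most `g`, `c ≥ 1`, and `τ₁, τ₂, …` are nondecreasing
temperature functions and `k₁, k₂, …` pairwise distinct positive integers such
that each `(T, τᵢ)` has a terminal supertile and self-assembles a `kᵢ × hᵢ`
rectangle with `1 ≤ hᵢ ≤ c`, then `f(n) = infᵢ τᵢ(n)` satisfies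
`f(n) ≤ (c + 1)·g` for every `n ≥ 1` (in particular `f(n) = O(1)`). -/
theorem rectangle_temperature_bound {G : Type} (str : G → ℕ) (g : ℕ)
    (hg : ∀ a : G, str a ≤ g) (T : Set (Tile G)) (hT : T.Finite)
    (c : ℕ) (hc : 1 ≤ c)
    (τ : ℕ → ℕ → ℕ) (hτ : ∀ i, Monotone (τ i))
    (k : ℕ → ℕ) (hk : Function.Injective k) (hkpos : ∀ i, 1 ≤ k i)
    (h : ℕ → ℕ)
    (hsys : ∀ i : ℕ, 1 ≤ h i ∧ h i ≤ c ∧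
      (∃ α : Assembly G T, Terminal str T (τ i) α) ∧
      SelfAssembles str T (τ i) (rect (k i) (h i))) :
    ∀ n : ℕ, 1 ≤ n → (⨅ i : ℕ, τ i n) ≤ (c + 1) * g := by
  intro n _
  refine (rectangle_temperature_bound_general str g hg T c τ hτ k
    (Set.infinite_range_of_injective hk) h (fun i => ?_) n).trans
    (Nat.mul_le_mul_right g c.le_succ)
  obtain ⟨hpos, hle, ⟨α, hα⟩, hself⟩ := hsys i
  exact ⟨hpos, hle, α, hα.unbreakable, hself α hα⟩
end

section
/- Let α be an assembly over a tile set in which every glue has strength at most g, suppose the domain of α is a translate of the k × k square with k ≥ 2, and let τ be a nondecreasing temperature function. If α is τ-stable, then τ(⌊k²/2⌋) ≤ (k + 1)·g, and consequently τ(⌊k²/2⌋) ≤ 4·g·√(⌊k²/2⌋) as real numbers. -/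
section BondStrength

variable {G : Type} {T : Set (Tile G)} {str : G → ℕ} {g : ℕ}

lemma adj_of_tileBond_ne_zero {t u : Tile G} {p q : ℤ × ℤ} (h : tileBond str t u p q ≠ 0) :
    Adj p q := by
  unfold tileBond at h
  unfold Adj
  split_ifs at h with hq hq hq hq
  · simp [hq]
  · simp [hq]
  · simp [hq]
  · simp [hq]
  · exact absurd rfl h

lemma adj_of_posBond_ne_zero {α : Assembly G T} {p q : ℤ × ℤ} (h : posBond str α p q ≠ 0) :
    Adj p q := by
  unfold posBond at h
  split at h
  exacts [adj_of_tileBond_ne_zero h, absurd rfl h]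

lemma cutStrength_le_card_mul (hg : ∀ a, str a ≤ g) (α : Assembly G T) {A B : Finset (ℤ × ℤ)}
    {C : Finset ((ℤ × ℤ) × (ℤ × ℤ))} (hC : ∀ p ∈ A, ∀ q ∈ B, Adj p q → (p, q) ∈ C) :
    cutStrength str α A B ≤ C.card * g := by
  classical
  calc cutStrength str α A B
      = ∑ x ∈ A ×ˢ B, posBond str α x.1 x.2 := (Finset.sum_product' _ _ _).symm
    _ = ∑ x ∈ A ×ˢ B with posBond str α x.1 x.2 ≠ 0, posBond str α x.1 x.2 :=
        (Finset.sum_filter_ne_zero _).symm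
    _ ≤ ∑ x ∈ C, posBond str α x.1 x.2 := by
        refine Finset.sum_le_sum_of_subset fun x hx ↦ ?_
        obtain ⟨hAB, hbond⟩ := Finset.mem_filter.mp hx
        obtain ⟨hA, hB⟩ := Finset.mem_product.mp hAB
        exact hC _ hA _ hB (adj_of_posBond_ne_zero hbond)
    _ ≤ C.card * g := Finset.sum_le_card_nsmul _ _ _ fun x _ ↦ posBond_le hg α x.1 x.2

end BondStrength

section Sweep

/-- The `i`-th cell, counting from `0`, in the column-by-column enumeration (each column upwards) of
the half-strip `{1, 2, …} × {1, …, h}` translated by `v`. Its first `w * h` values are the cells of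
a translate of `rect w h`. -/
def sweep (h : ℕ) (v : ℤ × ℤ) (i : ℕ) : ℤ × ℤ :=
  (((i / h : ℕ) : ℤ) + 1, ((i % h : ℕ) : ℤ) + 1) + v

variable {h : ℕ} {v : ℤ × ℤ}

lemma sweep_injective : Function.Injective (sweep h v) := by
  intro i j hij
  simp only [sweep, add_left_inj, Prod.mk.injEq, Nat.cast_inj] at hij
  rw [← Nat.div_add_mod i h, ← Nat.div_add_mod j h, hij.1, hij.2]

lemma cast_add_one_mem_rect {w h c r : ℕ} :
    ((c + 1, r + 1) : ℤ × ℤ) ∈ rect w h ↔ c < w ∧ r < h := by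
  simp only [rect, Set.mem_ofPred_eq]
  omega

lemma image_sweep_Iio (w h : ℕ) (v : ℤ × ℤ) :
    sweep h v '' Set.Iio (w * h) = (· + v) '' rect w h := by
  apply Set.Subset.antisymm
  · rintro _ ⟨i, hi, rfl⟩
    have hcol : i / h < w := Nat.div_lt_of_lt_mul (mul_comm w h ▸ hi)
    have hrow : i % h < h := Nat.mod_lt i (Nat.pos_of_lt_mul_left hi)
    exact ⟨_, cast_add_one_mem_rect.mpr ⟨hcol, hrow⟩, rfl⟩
  · rintro _ ⟨⟨x, y⟩, hxy, rfl⟩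
    obtain ⟨c, rfl⟩ : ∃ c : ℕ, x = c + 1 := ⟨(x - 1).toNat, by have := hxy.1; omega⟩
    obtain ⟨r, rfl⟩ : ∃ r : ℕ, y = r + 1 := ⟨(y - 1).toNat, by have := hxy.2.2.1; omega⟩
    obtain ⟨hc, hr⟩ := cast_add_one_mem_rect.mp hxy
    refine ⟨h * c + r, ?_, ?_⟩
    · calc h * c + r < (c + 1) * h := by linarith
        _ ≤ w * h := Nat.mul_le_mul_right h hc
    · simp [sweep, Nat.mul_add_div hr.pos, Nat.div_eq_of_lt hr, Nat.mod_eq_of_lt hr]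

lemma eq_add_one_or_eq_add_of_adj_sweep {i j : ℕ} (hij : i < j)
    (hadj : Adj (sweep h v i) (sweep h v j)) : j = i + 1 ∨ j = i + h := by
  have hi := Nat.div_add_mod i h
  have hj := Nat.div_add_mod j h
  have hcol : i / h ≤ j / h := Nat.div_le_div_right hij.le
  simp only [Adj, sweep, Prod.fst_add, Prod.snd_add] at hadj
  obtain ⟨same_col, next_row⟩ | ⟨next_col, same_row⟩ :
      (j / h = i / h ∧ j % h ≤ i % h + 1) ∨ (j / h = i / h + 1 ∧ j % h = i % h) := by
    omega
  · left
    rw [same_col] at hj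
    omega
  · right
    rw [next_col, mul_add_one, same_row] at hj
    omega

end Sweep

section SweepCut

variable {G : Type} {T : Set (Tile G)} {str : G → ℕ} {g : ℕ} {α : Assembly G T} {τ : ℕ → ℕ}
  {h : ℕ} {v : ℤ × ℤ}

lemma cutStrength_image_sweep_le (hg : ∀ a, str a ≤ g) {n N : ℕ} :
    cutStrength str α ((Finset.range n).image (sweep h v)) ((Finset.Ico n N).image (sweep h v)) ≤
      (h + 1) * g := by
  let crossing : Finset (ℕ × ℕ) :=
    insert (n - 1, n) ((Finset.Ico (n - h) n).image fun i ↦ (i, i + h))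
  have card_crossing : crossing.card ≤ h + 1 := by
    refine (Finset.card_insert_le _ _).trans (Nat.succ_le_succ (Finset.card_image_le.trans ?_))
    rw [Nat.card_Ico]
    omega
  have mem_crossing {i j : ℕ} (hi : i < n) (hj : n ≤ j) (hij : j = i + 1 ∨ j = i + h) :
      (i, j) ∈ crossing := by
    simp only [crossing, Finset.mem_insert, Finset.mem_image, Finset.mem_Ico, Prod.mk.injEq]
    obtain rfl | rfl := hij
    · left
      omega
    · right
      exact ⟨i, by omega, rfl, rfl⟩
  calc cutStrength str α ((Finset.range n).image (sweep h v)) ((Finset.Ico n N).image (sweep h v))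
      ≤ (crossing.image (Prod.map (sweep h v) (sweep h v))).card * g := by
        refine cutStrength_le_card_mul hg α fun p hp q hq hadj ↦ ?_
        obtain ⟨i, hi, rfl⟩ := Finset.mem_image.mp hp
        obtain ⟨j, hj, rfl⟩ := Finset.mem_image.mp hq
        have hin : i < n := Finset.mem_range.mp hi
        have hnj : n ≤ j := (Finset.mem_Ico.mp hj).1
        exact Finset.mem_image_of_mem (Prod.map (sweep h v) (sweep h v))
          (mem_crossing hin hnj (eq_add_one_or_eq_add_of_adj_sweep (hin.trans_le hnj) hadj))
    _ ≤ (h + 1) * g := Nat.mul_le_mul_right g (Finset.card_image_le.trans card_crossing)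

lemma IsStable.temperature_le_of_dom_eq_image_sweep (hstable : IsStable str τ α)
    (hg : ∀ a, str a ≤ g) {n N : ℕ} (hdom : α.dom = (Finset.range N).image (sweep h v))
    (hn : 0 < n) (hnN : n < N) :
    τ (min n (N - n)) ≤ (h + 1) * g := by
  have hdisj : Disjoint ((Finset.range n).image (sweep h v))
      ((Finset.Ico n N).image (sweep h v)) := by
    rw [Finset.disjoint_image sweep_injective, Finset.range_eq_Ico]
    exact Finset.Ico_disjoint_Ico_consecutive 0 n N
  have hunion : (Finset.range n).image (sweep h v) ∪ (Finset.Ico n N).image (sweep h v) =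
      α.dom := by
    rw [hdom, ← Finset.image_union, Finset.range_eq_Ico,
      Finset.Ico_union_Ico_eq_Ico n.zero_le hnN.le, Finset.range_eq_Ico]
  have hcut := hstable _ _ hdisj hunion
    ((Finset.nonempty_range_iff.mpr hn.ne').image _) ((Finset.nonempty_Ico.mpr hnN).image _)
  rw [Finset.card_image_of_injective _ sweep_injective, Finset.card_range,
    Finset.card_image_of_injective _ sweep_injective, Nat.card_Ico] at hcut
  exact hcut.trans (cutStrength_image_sweep_le hg)

lemma IsStable.temperature_le_of_dom_eq_rect (hstable : IsStable str τ α)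
    (hg : ∀ a, str a ≤ g) {w n : ℕ} (hdom : (α.dom : Set (ℤ × ℤ)) = (· + v) '' rect w h)
    (hn : 0 < n) (hnwh : n < w * h) :
    τ (min n (w * h - n)) ≤ (h + 1) * g := by
  refine hstable.temperature_le_of_dom_eq_image_sweep (v := v) hg (Finset.coe_injective ?_) hn hnwh
  rw [hdom, Finset.coe_image, Finset.coe_range, image_sweep_Iio]

end SweepCut

lemma add_one_le_four_mul_sqrt {h m : ℕ} (hm : 0 < m) (hhm : h ^ 2 ≤ 2 * m + 1) :
    (h + 1 : ℝ) ≤ 4 * √m := by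
  have hsq : (h + 1) ^ 2 ≤ 4 ^ 2 * m := by
    have two_mul_le : 2 * h ≤ h ^ 2 + 1 := by simpa using two_mul_le_add_sq h 1
    linarith
  calc (h + 1 : ℝ) ≤ √(4 ^ 2 * m) := Real.le_sqrt_of_sq_le (by exact_mod_cast hsq)
    _ = 4 * √m := by rw [Real.sqrt_mul (by positivity), Real.sqrt_sq (by positivity)]

theorem stable_square_temperature_bound_general {G : Type} {T : Set (Tile G)}
    (str : G → ℕ) (g : ℕ) (hg : ∀ a : G, str a ≤ g)
    (α : Assembly G T) (w h : ℕ) (hhw : h ≤ w) (hwh : 2 ≤ w * h)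
    (hdom : ∃ v : ℤ × ℤ, (↑α.dom : Set (ℤ × ℤ)) = (· + v) '' rect w h)
    (τ : ℕ → ℕ) (hstable : IsStable str τ α) :
    τ (w * h / 2) ≤ (h + 1) * g ∧
      (τ (w * h / 2) : ℝ) ≤ 4 * g * √(w * h / 2 : ℕ) := by
  obtain ⟨v, hdom⟩ := hdom
  have hbound : τ (w * h / 2) ≤ (h + 1) * g := by
    have hhalf :=
      hstable.temperature_le_of_dom_eq_rect hg hdom (n := w * h / 2) (by omega) (by omega)
    rwa [min_eq_left (by omega)] at hhalf
  have hsq : h ^ 2 ≤ 2 * (w * h / 2) + 1 := by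
    have : h ^ 2 ≤ w * h := sq h ▸ Nat.mul_le_mul_right h hhw
    omega
  refine ⟨hbound, ?_⟩
  calc (τ (w * h / 2) : ℝ) ≤ g * (h + 1) := by exact_mod_cast mul_comm g (h + 1) ▸ hbound
    _ ≤ g * (4 * √(w * h / 2 : ℕ)) :=
        mul_le_mul_of_nonneg_left (add_one_le_four_mul_sqrt (by omega) hsq) g.cast_nonneg
    _ = 4 * g * √(w * h / 2 : ℕ) := by ring

/-- If `α` is an assembly over a tile set in which every glue has
strength at most `g`, the domain of `α` is a translate of the `k × k` square
with `k ≥ 2`, `τ` is a nondecreasing temperature function, and `α` is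
`τ`-stable, then `τ(⌊k²/2⌋) ≤ (k + 1)·g`, and consequently
`τ(⌊k²/2⌋) ≤ 4·g·√(⌊k²/2⌋)` as real numbers. -/
theorem stable_square_temperature_bound {G : Type} {T : Set (Tile G)}
    (str : G → ℕ) (g : ℕ) (hg : ∀ a : G, str a ≤ g)
    (α : Assembly G T) (k : ℕ) (hk : 2 ≤ k)
    (hdom : ∃ v : ℤ × ℤ, (↑α.dom : Set (ℤ × ℤ)) = (· + v) '' rect k k)
    (τ : ℕ → ℕ) (hτ : Monotone τ) (hstable : IsStable str τ α) :
    τ (k ^ 2 / 2) ≤ (k + 1) * g ∧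
      ((τ (k ^ 2 / 2) : ℝ) ≤ 4 * g * Real.sqrt ((k ^ 2 / 2 : ℕ) : ℝ)) := by
  simpa only [sq] using
    stable_square_temperature_bound_general str g hg α k k le_rfl (by nlinarith) hdom τ hstable
end

section
/- For all integers w ≥ h ≥ 1 and every integer n with 1 ≤ n ≤ wh/2, there exist disjoint nonempty sets A, B ⊆ ℤ² with A ∪ B = {1,…,w} × {1,…,h}, |A| = n, such that both A and B are connected under grid adjacency and the number of pairs (p, q) with p ∈ A, q ∈ B, and p and q at distance 1 is at most h + 1. -/
instance : ∀ p q : ℤ × ℤ, Decidable (Adj p q) := fun p q =>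
  inferInstanceAs (Decidable ((p.1 - q.1).natAbs + (p.2 - q.2).natAbs = 1))

open Finset Relation

section Rank

variable {α β : Type*} [LinearOrder β] {s : Finset α} {f : α → β}

lemma injOn_card_filter_lt (hf : Set.InjOn f s) :
    Set.InjOn (fun c => #{a ∈ s | f a < f c}) s := by
  have rank_lt {a b : α} (ha : a ∈ s) (hab : f a < f b) :
      #{x ∈ s | f x < f a} < #{x ∈ s | f x < f b} := by
    have subset : {x ∈ s | f x < f a} ⊆ {x ∈ s | f x < f b} :=
      monotone_filter_right s fun _ _ hx => hx.trans hab
    exact card_lt_card ((ssubset_iff_of_subset subset).2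
      ⟨a, mem_filter.2 ⟨ha, hab⟩, fun h => lt_irrefl _ (mem_filter.1 h).2⟩)
  intro a ha b hb hab
  by_contra hne
  rcases (hf.ne ha hb hne).lt_or_gt with h | h
  · exact (rank_lt ha h).ne hab
  · exact (rank_lt hb h).ne' hab

lemma exists_card_filter_lt_eq (hf : Set.InjOn f s) {n : ℕ} (hn : n < #s) :
    ∃ c ∈ s, #{a ∈ s | f a < f c} = n := by
  have maps_to : Set.MapsTo (fun c => #{a ∈ s | f a < f c}) s (range #s) := fun c hc =>
    mem_coe.2 <| mem_range.2 <| card_lt_card <| filter_ssubset.2 ⟨c, hc, lt_irrefl _⟩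
  simpa using surjOn_of_injOn_of_card_le _ maps_to (injOn_card_filter_lt hf) (by simp)
    (mem_coe.2 (mem_range.2 hn))

end Rank

section Connectedness

/-- The `ℓ¹` distance on `ℤ²`, so that `Adj p q` is `taxicabDist p q = 1`. It decreases along the
walks used to prove connectedness. -/
def taxicabDist (p q : ℤ × ℤ) : ℕ :=
  (p.1 - q.1).natAbs + (p.2 - q.2).natAbs

lemma Adj.symm {p q : ℤ × ℤ} (h : Adj p q) : Adj q p := by
  unfold Adj at *
  omega

lemma exists_adj_mem_uIcc_taxicabDist_lt {r p : ℤ × ℤ} (h : p ≠ r) :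
    ∃ q ∈ Set.uIcc r p, Adj p q ∧ taxicabDist q r < taxicabDist p r := by
  obtain ⟨x, y⟩ := p
  obtain ⟨u, v⟩ := r
  rw [Ne, Prod.mk.injEq, not_and_or, ← ne_eq, ← ne_eq, ne_iff_lt_or_gt, ne_iff_lt_or_gt] at h
  simp only [Set.uIcc, Set.mem_Icc, Prod.exists, Prod.le_def, Prod.fst_inf, Prod.snd_inf,
    Prod.fst_sup, Prod.snd_sup, Adj, taxicabDist]
  rcases h with (h | h) | h | h
  · exact ⟨x + 1, y, by omega⟩
  · exact ⟨x - 1, y, by omega⟩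
  · exact ⟨x, y + 1, by omega⟩
  · exact ⟨x, y - 1, by omega⟩

lemma connectedIn_of_uIcc_subset {S : Set (ℤ × ℤ)} (r : ℤ × ℤ)
    (hS : ∀ p ∈ S, Set.uIcc r p ⊆ S) : ConnectedIn S := by
  have walk_to_root (p : ℤ × ℤ) (hp : p ∈ S) :
      ReflTransGen (fun a b => Adj a b ∧ a ∈ S ∧ b ∈ S) p r := by
    induction hd : taxicabDist p r using Nat.strong_induction_on generalizing p with
    | _ d ih =>
      obtain rfl | hne := eq_or_ne p r
      · exact .refl
      · obtain ⟨q, hq, hadj, hlt⟩ := exists_adj_mem_uIcc_taxicabDist_lt hne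
        exact .head ⟨hadj, hp, hS p hp hq⟩ (ih _ (hd ▸ hlt) q (hS p hp hq) rfl)
  have step_symm : Std.Symm (fun a b => Adj a b ∧ a ∈ S ∧ b ∈ S) :=
    ⟨fun _ _ ⟨hadj, ha, hb⟩ => ⟨hadj.symm, hb, ha⟩⟩
  exact fun p hp q hq => (walk_to_root p hp).trans
    (ReflTransGen.stdSymm.symm _ _ (walk_to_root q hq))

end Connectedness

section LexCut

/-- The cells of `R` that come before `c` column by column, from bottom to top in each column. -/
def lexBelow (R : Finset (ℤ × ℤ)) (c : ℤ × ℤ) : Finset (ℤ × ℤ) :=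
  {p ∈ R | toLex p < toLex c}

/-- The cells of `R` that do not come before `c`: the complement of `lexBelow R c` in `R`. -/
def lexAbove (R : Finset (ℤ × ℤ)) (c : ℤ × ℤ) : Finset (ℤ × ℤ) :=
  {p ∈ R | ¬ toLex p < toLex c}

/-- The grid edges between `A` and `B`, each recorded once for disjoint `A` and `B`: as a pair whose
first entry lies in `A`. -/
def cutEdges (A B : Finset (ℤ × ℤ)) : Finset ((ℤ × ℤ) × (ℤ × ℤ)) :=
  {e ∈ A ×ˢ B | Adj e.1 e.2}

lemma connectedIn_lexBelow_Icc (l u c : ℤ × ℤ) :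
    ConnectedIn (lexBelow (Icc l u) c : Set (ℤ × ℤ)) := by
  refine connectedIn_of_uIcc_subset l fun p hp q hq => ?_
  simp only [lexBelow, coe_filter, mem_Icc, Set.mem_ofPred_eq] at hp ⊢
  rw [Set.uIcc_of_le hp.1.1] at hq
  exact ⟨⟨hq.1, hq.2.trans hp.1.2⟩, (Prod.Lex.toLex_mono hq.2).trans_lt hp.2⟩

lemma connectedIn_lexAbove_Icc (l u c : ℤ × ℤ) :
    ConnectedIn (lexAbove (Icc l u) c : Set (ℤ × ℤ)) := by
  refine connectedIn_of_uIcc_subset u fun p hp q hq => ?_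
  simp only [lexAbove, not_lt, coe_filter, mem_Icc, Set.mem_ofPred_eq] at hp ⊢
  rw [Set.uIcc_of_ge hp.1.2] at hq
  exact ⟨⟨hp.1.1.trans hq.1, hq.2⟩, hp.2.trans (Prod.Lex.toLex_mono hq.1)⟩

lemma mem_cutEdges_lex {R : Finset (ℤ × ℤ)} {c : ℤ × ℤ} {e : (ℤ × ℤ) × (ℤ × ℤ)} :
    e ∈ cutEdges (lexBelow R c) (lexAbove R c) ↔
      (e.1 ∈ R ∧ e.2 ∈ R) ∧ Adj e.1 e.2 ∧ toLex e.1 < toLex c ∧ toLex c ≤ toLex e.2 := by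
  simp only [cutEdges, lexBelow, lexAbove, mem_filter, mem_product, not_lt]
  tauto

section

variable {c p q : ℤ × ℤ}

lemma Adj.eq_of_lex_cut_of_snd_ne (h : Adj p q) (hp : toLex p < toLex c)
    (hq : toLex c ≤ toLex q) (hrow : p.2 ≠ q.2) : p = (c.1, c.2 - 1) ∧ q = c := by
  simp only [Prod.Lex.toLex_lt_toLex, Prod.Lex.toLex_le_toLex, Adj, Prod.ext_iff] at *
  omega

lemma Adj.fst_eq_of_lex_cut_of_snd_eq (h : Adj p q) (hp : toLex p < toLex c)
    (hq : toLex c ≤ toLex q) (hrow : p.2 = q.2) :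
    p.1 = (if p.2 < c.2 then c.1 else c.1 - 1) ∧ q.1 = p.1 + 1 := by
  simp only [Prod.Lex.toLex_lt_toLex, Prod.Lex.toLex_le_toLex, Adj] at *
  split_ifs <;> omega

end

lemma card_vertical_cutEdges_lex_le_one (R : Finset (ℤ × ℤ)) (c : ℤ × ℤ) :
    #{e ∈ cutEdges (lexBelow R c) (lexAbove R c) | e.1.2 ≠ e.2.2} ≤ 1 := by
  refine card_le_one_iff_subset_singleton.2 ⟨((c.1, c.2 - 1), c), fun e he => ?_⟩
  simp only [mem_filter, mem_cutEdges_lex] at he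
  obtain ⟨⟨-, hadj, hlt, hle⟩, hrow⟩ := he
  exact mem_singleton.2 (Prod.ext_iff.2 (hadj.eq_of_lex_cut_of_snd_ne hlt hle hrow))

lemma card_horizontal_cutEdges_lex_le (R : Finset (ℤ × ℤ)) (c : ℤ × ℤ) :
    #{e ∈ cutEdges (lexBelow R c) (lexAbove R c) | e.1.2 = e.2.2} ≤ #(R.image Prod.snd) := by
  refine card_le_card_of_injOn (fun e => e.1.2) (fun e he => ?_) fun e he e' he' heq => ?_
  all_goals simp only [coe_filter, mem_cutEdges_lex, Set.mem_ofPred_eq] at *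
  · exact mem_coe.2 (mem_image_of_mem _ he.1.1.1)
  · obtain ⟨⟨-, hadj, hlt, hle⟩, hrow⟩ := he
    obtain ⟨⟨-, hadj', hlt', hle'⟩, hrow'⟩ := he'
    obtain ⟨hp, hq⟩ := hadj.fst_eq_of_lex_cut_of_snd_eq hlt hle hrow
    obtain ⟨hp', hq'⟩ := hadj'.fst_eq_of_lex_cut_of_snd_eq hlt' hle' hrow'
    simp only [Prod.ext_iff]
    grind

lemma card_cutEdges_lex_le (R : Finset (ℤ × ℤ)) (c : ℤ × ℤ) :
    #(cutEdges (lexBelow R c) (lexAbove R c)) ≤ #(R.image Prod.snd) + 1 := by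
  rw [← card_filter_add_card_filter_not (fun e : (ℤ × ℤ) × (ℤ × ℤ) => e.1.2 = e.2.2)]
  exact add_le_add (card_horizontal_cutEdges_lex_le R c) (card_vertical_cutEdges_lex_le_one R c)

end LexCut

section Rectangle

variable (w h : ℕ)

lemma coe_Icc_one_one : (↑(Icc (1, 1) ((w : ℤ), (h : ℤ))) : Set (ℤ × ℤ)) = rect w h := by
  ext p
  simp only [coe_Icc, Set.mem_Icc, Prod.le_def, rect, Set.mem_ofPred_eq]
  tauto

lemma card_Icc_one_one : #(Icc (1, 1) ((w : ℤ), (h : ℤ))) = w * h := by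
  simp [card_Icc_prod]

lemma card_image_snd_Icc_one_one_le :
    #((Icc (1, 1) ((w : ℤ), (h : ℤ))).image Prod.snd) ≤ h :=
  calc #((Icc (1, 1) ((w : ℤ), (h : ℤ))).image Prod.snd)
      ≤ #(Icc 1 (h : ℤ)) := card_le_card subset_product_image_snd
    _ = h := by simp

end Rectangle

theorem rectangle_cut_exists_general (w h n : ℕ) (hn : 1 ≤ n) (hn2 : n < w * h) :
    ∃ A B : Finset (ℤ × ℤ), Disjoint A B ∧ A.Nonempty ∧ B.Nonempty ∧
      (↑(A ∪ B) : Set (ℤ × ℤ)) = rect w h ∧ A.card = n ∧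
      ConnectedIn (↑A : Set (ℤ × ℤ)) ∧ ConnectedIn (↑B : Set (ℤ × ℤ)) ∧
      ((A ×ˢ B).filter (fun pq => Adj pq.1 pq.2)).card ≤ h + 1 := by
  set R := Icc (1, 1) ((w : ℤ), (h : ℤ))
  obtain ⟨c, hcR, hcard⟩ : ∃ c ∈ R, #(lexBelow R c) = n :=
    exists_card_filter_lt_eq toLex.injective.injOn (hn2.trans_eq (card_Icc_one_one w h).symm)
  refine ⟨lexBelow R c, lexAbove R c, disjoint_filter_filter_not _ _ _, card_pos.1 (by omega),
    ⟨c, mem_filter.2 ⟨hcR, lt_irrefl _⟩⟩, ?_, hcard, connectedIn_lexBelow_Icc _ _ c,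
    connectedIn_lexAbove_Icc _ _ c, ?_⟩
  · rw [lexBelow, lexAbove, filter_union_filter_not_eq, coe_Icc_one_one]
  · exact (card_cutEdges_lex_le R c).trans
      (Nat.add_le_add_right (card_image_snd_Icc_one_one_le w h) 1)

/-- For all integers `w ≥ h ≥ 1` and every integer `n` with
`1 ≤ n ≤ wh/2`, the `w × h` rectangle can be partitioned into disjoint
nonempty parts `A` and `B` with `|A| = n`, both connected under grid
adjacency, such that the number of grid-adjacent pairs `(p, q)` with `p ∈ A`
and `q ∈ B` is at most `h + 1`. -/
theorem rectangle_cut_exists (w h : ℕ) (hh : 1 ≤ h) (hw : h ≤ w)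
    (n : ℕ) (hn : 1 ≤ n) (hn2 : 2 * n ≤ w * h) :
    ∃ A B : Finset (ℤ × ℤ), Disjoint A B ∧ A.Nonempty ∧ B.Nonempty ∧
      (↑(A ∪ B) : Set (ℤ × ℤ)) = rect w h ∧ A.card = n ∧
      ConnectedIn (↑A : Set (ℤ × ℤ)) ∧ ConnectedIn (↑B : Set (ℤ × ℤ)) ∧
      ((A ×ˢ B).filter (fun pq => Adj pq.1 pq.2)).card ≤ h + 1 :=
  rectangle_cut_exists_general w h n hn (by omega)
end
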